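/- For every request sequence R, the sum of all radii computed by Algorithm Square is at most three times the optimum: Σ_{i=1}^{N} ρ(i) ≤ 3·|opt|. -/

import Mathlib

open Finset

/-- A replica is a pair `(v, t)` of a network node and a time. -/
abbrev Replica : Type := ℕ × ℕ

/-- A (directed) grid edge is a pair of replicas. -/
abbrev GEdge : Type := Replica × Replica

/-- Horizontal directed edge `((v,t),(v+1,t))`. -/
def isHoriz (e : GEdge) : Prop := e.2 = (e.1.1 + 1, e.1.2)

/-- Vertical arc `((v,t),(v,t+1))`. -/
def isArc (e : GEdge) : Prop := e.2 = (e.1.1, e.1.2 + 1)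

def isGridEdge (e : GEdge) : Prop := isHoriz e ∨ isArc e

/-- The quarter ball `B(r,ρ)`: replicas `(u,s)` with `u ≤ v`, `s ≤ t` and
`(v−u)+(t−s) ≤ ρ`. -/
def qball (r : Replica) (ρ : ℕ) : Set Replica :=
  {q | q.1 ≤ r.1 ∧ q.2 ≤ r.2 ∧ (r.1 - q.1) + (r.2 - q.2) ≤ ρ}

/-- Grid edges with both endpoints in the quarter ball `B(r,ρ)`. -/
def ballEdge (r : Replica) (ρ : ℕ) (e : GEdge) : Prop :=
  isGridEdge e ∧ e.1 ∈ qball r ρ ∧ e.2 ∈ qball r ρ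

/-- Two quarter balls are edge-disjoint if they share no grid edge. -/
def BallsEdgeDisjoint (r : Replica) (ρ : ℕ) (r' : Replica) (ρ' : ℕ) : Prop :=
  ∀ e : GEdge, ¬ (ballEdge r ρ e ∧ ballEdge r' ρ' e)

/-- The square `Sq(r,ρ) = [v−ρ,v] × [t−ρ,t]`. -/
def SqRect (r : Replica) (ρ : ℕ) : Set Replica :=
  {q | r.1 - ρ ≤ q.1 ∧ q.1 ≤ r.1 ∧ r.2 - ρ ≤ q.2 ∧ q.2 ≤ r.2}

/-- Directed `L∞` distance `d∞(q,r)`: `max(v−u, t−s)` if `u ≤ v` and `s ≤ t`,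
and `∞` otherwise. -/
def distInf (q r : Replica) : ℕ∞ :=
  if q.1 ≤ r.1 ∧ q.2 ≤ r.2 then ((max (r.1 - q.1) (r.2 - q.2) : ℕ) : ℕ∞) else ⊤

/-- The replicas of an edge set: `(0,0)` together with all endpoints of its edges. -/
def Repl (F : Finset GEdge) : Set Replica :=
  insert ((0, 0) : Replica) {q | ∃ e ∈ F, q = e.1 ∨ q = e.2}

/-- The arcs of the vertical path at node `u` from time `s` to time `τ`. -/
def vertPath (u s τ : ℕ) : Finset GEdge :=
  (Finset.range (τ - s)).image (fun k => ((u, s + k), (u, s + k + 1)))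

/-- The horizontal edges of the path at time `τ` from node `u` to node `w`. -/
def horizPath (τ u w : ℕ) : Finset GEdge :=
  (Finset.range (w - u)).image (fun k => ((u + k, τ), (u + k + 1, τ)))

/-- A directed path from `a` to `b` all of whose edges belong to `F`. -/
def PathIn (F : Finset GEdge) (a b : Replica) : Prop :=
  ∃ (L : ℕ) (f : ℕ → Replica), f 0 = a ∧ f L = b ∧ ∀ k < L, (f k, f (k + 1)) ∈ F

/-- An execution of Algorithm `Square` on a request sequence
`r_1 = (v 1, t 1), …, r_N = (v N, t N)` (with `t 0 = 0` and nondecreasing times).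
`sol i` is the edge set after handling request `i`; `ρ i` is the radius of
request `i`; `(u' i, s' i)` is its closest replica and `(us i, ss i)` its
serving replica.  The fields record the specification SQ1–SQ5. -/
structure SquareRun where
  N : ℕ
  v : ℕ → ℕ
  t : ℕ → ℕ
  ρ : ℕ → ℕ
  u' : ℕ → ℕ
  s' : ℕ → ℕ
  us : ℕ → ℕ
  ss : ℕ → ℕ
  sol : ℕ → Finset GEdge
  t_zero : t 0 = 0
  t_mono : ∀ i j, i ≤ j → j ≤ N → t i ≤ t j
  sol_zero : sol 0 = ∅
  /-- SQ2: `ρ i` is a lower bound on the distance from every replica of the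
  current solution (after the SQ1 additions) to `r_i`. -/
  rho_min : ∀ i, 1 ≤ i → i ≤ N →
    ∀ q ∈ Repl (sol (i - 1) ∪ vertPath 0 (t (i - 1)) (t i)),
      (ρ i : ℕ∞) ≤ distInf q (v i, t i)
  /-- SQ2: the closest replica belongs to the current solution. -/
  closest_mem : ∀ i, 1 ≤ i → i ≤ N →
    (u' i, s' i) ∈ Repl (sol (i - 1) ∪ vertPath 0 (t (i - 1)) (t i))
  /-- SQ2: the closest replica attains the radius. -/
  closest_dist : ∀ i, 1 ≤ i → i ≤ N →
    distInf (u' i, s' i) (v i, t i) = (ρ i : ℕ∞)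
  /-- SQ2: among replicas of node `u' i`, the closest replica is the latest. -/
  closest_late : ∀ i, 1 ≤ i → i ≤ N → ∀ s, s ≤ t i →
    (u' i, s) ∈ Repl (sol (i - 1) ∪ vertPath 0 (t (i - 1)) (t i)) → s ≤ s' i
  /-- SQ3: the serving replica is in the current solution and in `Sq(r_i, 5ρ i)`. -/
  serv_mem : ∀ i, 1 ≤ i → i ≤ N →
    (us i, ss i) ∈ Repl (sol (i - 1) ∪ vertPath 0 (t (i - 1)) (t i)) ∧
      (us i, ss i) ∈ SqRect (v i, t i) (5 * ρ i)
  /-- SQ3: the serving node is leftmost. -/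
  serv_min : ∀ i, 1 ≤ i → i ≤ N →
    ∀ q ∈ Repl (sol (i - 1) ∪ vertPath 0 (t (i - 1)) (t i)),
      q ∈ SqRect (v i, t i) (5 * ρ i) → us i ≤ q.1
  /-- SQ3: among those, the serving time is latest. -/
  serv_late : ∀ i, 1 ≤ i → i ≤ N →
    ∀ q ∈ Repl (sol (i - 1) ∪ vertPath 0 (t (i - 1)) (t i)),
      q ∈ SqRect (v i, t i) (5 * ρ i) → q.1 = us i → q.2 ≤ ss i
  /-- SQ1 + SQ4 + SQ5: the edges added while handling request `i`. -/
  step : ∀ i, 1 ≤ i → i ≤ N →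
    sol i = (sol (i - 1) ∪ vertPath 0 (t (i - 1)) (t i))
      ∪ vertPath (us i) (ss i) (t i) ∪ horizPath (t i) (us i) (v i)
      ∪ vertPath (us i) (t i) (t i + 4 * ρ i)

namespace SquareRun

variable (S : SquareRun)

/-- The `i`-th request replica. -/
def req (i : ℕ) : Replica := (S.v i, S.t i)

/-- The edges added in steps SQ4 and SQ5 while handling request `i`. -/
def added45 (i : ℕ) : Finset GEdge :=
  vertPath (S.us i) (S.ss i) (S.t i) ∪ horizPath (S.t i) (S.us i) (S.v i)
    ∪ vertPath (S.us i) (S.t i) (S.t i + 4 * S.ρ i)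

/-- Request `i` is covered if `v_i − u^s_i ≥ ρ(i)`. -/
def covered (i : ℕ) : Prop := S.ρ i ≤ S.v i - S.us i

def uncovered (i : ℕ) : Prop := ¬ S.covered i

/-- A feasible solution of the DMCD instance given by the requests of `S`. -/
def Feasible (F : Finset GEdge) : Prop :=
  (∀ e ∈ F, isGridEdge e) ∧
  (∀ i, 1 ≤ i → i ≤ S.N → PathIn F (0, 0) (S.req i)) ∧
  (∀ τ, τ < S.t S.N → ∃ w, ((w, τ), (w, τ + 1)) ∈ F)

/-- `S.IsParent i j` means `parent(j) = i`:  `i` is the least index greater than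
`j` such that `r_i` is uncovered and `SQball(j)`, `SQball(i)` are not
edge-disjoint. -/
def IsParent (i j : ℕ) : Prop :=
  1 ≤ j ∧ j < i ∧ i ≤ S.N ∧ S.uncovered j ∧ S.uncovered i ∧
    ¬ BallsEdgeDisjoint (S.req j) (S.ρ j) (S.req i) (S.ρ i) ∧
    ∀ k, j < k → k < i → S.uncovered k →
      BallsEdgeDisjoint (S.req j) (S.ρ j) (S.req k) (S.ρ k)

/-- A root: an uncovered request with no parent. -/
def IsRoot (i : ℕ) : Prop :=
  1 ≤ i ∧ i ≤ S.N ∧ S.uncovered i ∧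
    ∀ j, i < j → j ≤ S.N → S.uncovered j →
      BallsEdgeDisjoint (S.req i) (S.ρ i) (S.req j) (S.ρ j)

/-- `i ∈ Tree(iStar)`: one can go from `i` to `iStar` by repeatedly passing from
a child to its parent. -/
def InTree (i iStar : ℕ) : Prop :=
  Relation.ReflTransGen (fun a b => S.IsParent b a) i iStar

end SquareRun


theorem mem_vertPath_repl {F : Finset GEdge} {u s τ x : ℕ} (h : vertPath u s τ ⊆ F)
    (hs : s < τ) (h1 : s ≤ x) (h2 : x ≤ τ) : ((u, x) : Replica) ∈ Repl F := by
  right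
  by_cases hx : x < τ
  · refine ⟨((u, x), (u, x + 1)), h ?_, Or.inl rfl⟩
    unfold vertPath
    rw [Finset.mem_image]
    refine ⟨x - s, by rw [Finset.mem_range]; omega, ?_⟩
    have : s + (x - s) = x := by omega
    rw [this]
  · refine ⟨((u, x - 1), (u, x)), h ?_, Or.inr rfl⟩
    unfold vertPath
    rw [Finset.mem_image]
    refine ⟨x - 1 - s, by rw [Finset.mem_range]; omega, ?_⟩
    have h3 : s + (x - 1 - s) = x - 1 := by omega
    have h4 : x - 1 + 1 = x := by omega
    rw [h3, h4]

theorem mem_horizPath_repl {F : Finset GEdge} {u w τ x : ℕ} (h : horizPath τ u w ⊆ F)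
    (hs : u < w) (h1 : u ≤ x) (h2 : x ≤ w) : ((x, τ) : Replica) ∈ Repl F := by
  right
  by_cases hx : x < w
  · refine ⟨((x, τ), (x + 1, τ)), h ?_, Or.inl rfl⟩
    unfold horizPath
    rw [Finset.mem_image]
    refine ⟨x - u, by rw [Finset.mem_range]; omega, ?_⟩
    have : u + (x - u) = x := by omega
    rw [this]
  · refine ⟨((x - 1, τ), (x, τ)), h ?_, Or.inr rfl⟩
    unfold horizPath
    rw [Finset.mem_image]
    refine ⟨x - 1 - u, by rw [Finset.mem_range]; omega, ?_⟩
    have h3 : u + (x - 1 - u) = x - 1 := by omega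
    have h4 : x - 1 + 1 = x := by omega
    rw [h3, h4]

theorem repl_mono {F G : Finset GEdge} (h : F ⊆ G) : Repl F ⊆ Repl G := by
  rintro q (hq | ⟨e, he, hq⟩)
  · exact Or.inl hq
  · exact Or.inr ⟨e, h he, hq⟩

theorem repl_union {F G : Finset GEdge} {q : Replica} (h : q ∈ Repl (F ∪ G)) :
    q ∈ Repl F ∨ ∃ e ∈ G, q = e.1 ∨ q = e.2 := by
  rcases h with hq | ⟨e, he, hq⟩
  · exact Or.inl (Or.inl hq)
  · rcases Finset.mem_union.1 he with he | he
    · exact Or.inl (Or.inr ⟨e, he, hq⟩)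
    · exact Or.inr ⟨e, he, hq⟩

theorem vertPath_end {u s τ : ℕ} {q : Replica} (h : ∃ e ∈ vertPath u s τ, q = e.1 ∨ q = e.2) :
    q.1 = u ∧ s ≤ q.2 ∧ q.2 ≤ τ := by
  obtain ⟨e, he, hq⟩ := h
  unfold vertPath at he
  rw [Finset.mem_image] at he
  obtain ⟨k, hk, rfl⟩ := he
  rw [Finset.mem_range] at hk
  rcases hq with rfl | rfl <;> refine ⟨rfl, ?_, ?_⟩ <;> simp only <;> omega

theorem horizPath_end {u w τ : ℕ} {q : Replica} (h : ∃ e ∈ horizPath τ u w, q = e.1 ∨ q = e.2) :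
    q.2 = τ ∧ u ≤ q.1 ∧ q.1 ≤ w := by
  obtain ⟨e, he, hq⟩ := h
  unfold horizPath at he
  rw [Finset.mem_image] at he
  obtain ⟨k, hk, rfl⟩ := he
  rw [Finset.mem_range] at hk
  rcases hq with rfl | rfl <;> refine ⟨rfl, ?_, ?_⟩ <;> simp only <;> omega

namespace SquareRun

/-- The current solution of request `i` after SQ1. -/
def cur (S : SquareRun) (i : ℕ) : Finset GEdge :=
  S.sol (i - 1) ∪ vertPath 0 (S.t (i - 1)) (S.t i)

theorem sol_le_cur (S : SquareRun) (i : ℕ) : S.sol (i - 1) ⊆ S.cur i :=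
  Finset.subset_union_left

theorem cur_le_sol (S : SquareRun) (i : ℕ) (h1 : 1 ≤ i) (h2 : i ≤ S.N) :
    S.cur i ⊆ S.sol i := by
  rw [S.step i h1 h2]
  intro e he
  simp only [Finset.mem_union]
  exact Or.inl (Or.inl (Or.inl (Finset.mem_union.1 he)))

theorem sol_mono (S : SquareRun) (i j : ℕ) (h : i ≤ j) (hj : j ≤ S.N) : S.sol i ⊆ S.sol j := by
  induction j, h using Nat.le_induction with
  | base => exact Finset.Subset.refl _
  | succ n hn ih =>
    exact (ih (by omega)).trans ((S.sol_le_cur (n + 1)).trans (S.cur_le_sol _ (by omega) hj))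

theorem sol_le_cur' (S : SquareRun) (m i : ℕ) (h : m < i) (hi : i ≤ S.N) :
    S.sol m ⊆ S.cur i :=
  (S.sol_mono m (i - 1) (by omega) (by omega)).trans (S.sol_le_cur i)

theorem zero_mem (S : SquareRun) (i : ℕ) (h1 : 1 ≤ i) (hi : i ≤ S.N) :
    ((0, S.t i) : Replica) ∈ Repl (S.cur i) := by
  induction i, h1 using Nat.le_induction with
  | base =>
    by_cases h : S.t 0 < S.t 1
    · exact mem_vertPath_repl (F := S.cur 1) Finset.subset_union_right h h.le le_rfl
    · have : S.t 1 = 0 := by have := S.t_zero; omega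
      rw [this]; exact Or.inl rfl
  | succ n hn ih =>
    by_cases h : S.t n < S.t (n + 1)
    · exact mem_vertPath_repl (F := S.cur (n + 1)) Finset.subset_union_right h h.le le_rfl
    · have h3 : S.t (n + 1) = S.t n := by
        have := S.t_mono n (n + 1) (by omega) hi
        omega
      rw [h3]
      exact repl_mono ((S.cur_le_sol n hn (by omega)).trans (S.sol_le_cur (n + 1))) (ih (by omega))

theorem us_le (S : SquareRun) (i : ℕ) (h1 : 1 ≤ i) (hi : i ≤ S.N) :
    S.us i ≤ S.v i ∧ S.ss i ≤ S.t i ∧ S.v i ≤ S.us i + 5 * S.ρ i ∧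
      S.t i ≤ S.ss i + 5 * S.ρ i := by
  obtain ⟨a, b, c, d⟩ := (S.serv_mem i h1 hi).2
  simp only at a b c d
  omega

theorem row_mem (S : SquareRun) (m i w : ℕ) (h1 : 1 ≤ m) (hm : m < i) (hi : i ≤ S.N)
    (hw : S.us m ≤ w) (hw' : w ≤ S.v m) : ((w, S.t m) : Replica) ∈ Repl (S.cur i) := by
  have hs := S.step m h1 (by omega)
  have hle := S.us_le m h1 (by omega)
  refine repl_mono (S.sol_le_cur' m i hm hi) ?_
  by_cases h : S.us m < S.v m
  · refine mem_horizPath_repl (u := S.us m) (w := S.v m) ?_ h hw hw'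
    rw [hs]
    intro e he
    simp only [Finset.mem_union]
    tauto
  · have : w = S.us m := by omega
    subst this
    by_cases h' : S.ss m < S.t m
    · refine mem_vertPath_repl (s := S.ss m) (τ := S.t m) ?_ h' h'.le le_rfl
      rw [hs]
      intro e he
      simp only [Finset.mem_union]
      tauto
    · have h3 : S.t m = S.ss m := by omega
      rw [h3]
      exact repl_mono (S.cur_le_sol m h1 (by omega)) (S.serv_mem m h1 (by omega)).1

theorem col_mem (S : SquareRun) (m i x : ℕ) (h1 : 1 ≤ m) (hm : m < i) (hi : i ≤ S.N)
    (hx : S.t m ≤ x) (hx' : x ≤ S.t m + 4 * S.ρ m) :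
    ((S.us m, x) : Replica) ∈ Repl (S.cur i) := by
  have hs := S.step m h1 (by omega)
  have hle := S.us_le m h1 (by omega)
  by_cases h : x = S.t m
  · subst h; exact S.row_mem m i _ h1 hm hi le_rfl hle.1
  · refine repl_mono (S.sol_le_cur' m i hm hi) ?_
    refine mem_vertPath_repl (s := S.t m) (τ := S.t m + 4 * S.ρ m) ?_ (by omega) hx hx'
    rw [hs]
    intro e he
    simp only [Finset.mem_union]
    tauto

theorem origin_sol (S : SquareRun) (j n : ℕ) (hj : j ≤ n) (hn : n ≤ S.N) (q : Replica)
    (hq : q ∈ Repl (S.sol n)) :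
    q.1 = 0 ∨ q ∈ Repl (S.sol j) ∨ ∃ m, j < m ∧ m ≤ n ∧ S.us m ≤ q.1 ∧ q.1 ≤ S.v m ∧
      (q.2 ≤ S.t m ∨ (q.1 = S.us m ∧ q.2 ≤ S.t m + 4 * S.ρ m)) := by
  induction n, hj using Nat.le_induction with
  | base => exact Or.inr (Or.inl hq)
  | succ n hjn ih =>
    rw [S.step (n + 1) (by omega) hn] at hq
    have hle := S.us_le (n + 1) (by omega) hn
    rcases repl_union hq with hq | hq
    · rcases repl_union hq with hq | hq
      · rcases repl_union hq with hq | hq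
        · rcases repl_union hq with hq | hq
          · rcases ih (by omega) hq with h | h | ⟨m, h1, h2, h3⟩
            · exact Or.inl h
            · exact Or.inr (Or.inl h)
            · exact Or.inr (Or.inr ⟨m, h1, by omega, h3⟩)
          · exact Or.inl (vertPath_end hq).1
        · have := vertPath_end hq
          exact Or.inr (Or.inr ⟨n + 1, by omega, le_rfl, by omega, by omega, by omega⟩)
      · have := horizPath_end hq
        exact Or.inr (Or.inr ⟨n + 1, by omega, le_rfl, by omega, by omega, by omega⟩)
    · have := vertPath_end hq
      exact Or.inr (Or.inr ⟨n + 1, by omega, le_rfl, by omega, by omega, by omega⟩)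

theorem origin (S : SquareRun) (j i : ℕ) (h1 : 1 ≤ j) (hj : j ≤ i) (hi : i ≤ S.N) (q : Replica)
    (hq : q ∈ Repl (S.cur i)) :
    q.1 = 0 ∨ q ∈ Repl (S.sol (j - 1)) ∨ ∃ m, j ≤ m ∧ m < i ∧ S.us m ≤ q.1 ∧ q.1 ≤ S.v m ∧
      (q.2 ≤ S.t m ∨ (q.1 = S.us m ∧ q.2 ≤ S.t m + 4 * S.ρ m)) := by
  rcases repl_union hq with hq | hq
  · rcases S.origin_sol (j - 1) (i - 1) (by omega) (by omega) q hq with h | h | ⟨m, h1, h2, h3⟩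
    · exact Or.inl h
    · exact Or.inr (Or.inl h)
    · exact Or.inr (Or.inr ⟨m, by omega, by omega, h3⟩)
  · exact Or.inl (vertPath_end hq).1

theorem persist (S : SquareRun) (j : ℕ) (h1 : 1 ≤ j) (hj : j ≤ S.N) (q : Replica)
    (hq : q ∈ Repl (S.cur j)) (ht : S.t j ≤ q.2) : ((q.1, S.t j) : Replica) ∈ Repl (S.cur j) := by
  rcases S.origin 1 j le_rfl h1 hj q hq with h | h | ⟨m, hm1, hm2, hm3, hm4, hm5⟩
  · rw [h]; exact S.zero_mem j h1 hj
  · have h0 : S.sol (1 - 1) = ∅ := S.sol_zero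
    rw [h0] at h
    rcases h with h | ⟨e, he, _⟩
    · rw [h]; exact S.zero_mem j h1 hj
    · exact absurd he (Finset.notMem_empty _)
  · have hmj := S.t_mono m j hm2.le hj
    rcases hm5 with h | ⟨h, h'⟩
    · have : S.t j = S.t m := by omega
      rw [this]
      exact S.row_mem m j _ hm1 hm2 hj hm3 hm4
    · rw [h]
      exact S.col_mem m j _ hm1 hm2 hj hmj (by omega)

theorem rho_le (S : SquareRun) (i : ℕ) (h1 : 1 ≤ i) (hi : i ≤ S.N) (a b : ℕ)
    (hq : ((a, b) : Replica) ∈ Repl (S.cur i)) (ha : a ≤ S.v i) (hb : b ≤ S.t i) :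
    a + S.ρ i ≤ S.v i ∨ b + S.ρ i ≤ S.t i := by
  have h := S.rho_min i h1 hi _ hq
  unfold distInf at h
  rw [if_pos ⟨ha, hb⟩, Nat.cast_le] at h
  simp only [le_max_iff] at h
  omega

theorem closest (S : SquareRun) (i : ℕ) (h1 : 1 ≤ i) (hi : i ≤ S.N) :
    S.u' i ≤ S.v i ∧ S.s' i ≤ S.t i ∧ S.v i ≤ S.u' i + S.ρ i ∧ S.t i ≤ S.s' i + S.ρ i ∧
      (S.v i = S.u' i + S.ρ i ∨ S.t i = S.s' i + S.ρ i) := by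
  have h := S.closest_dist i h1 hi
  unfold distInf at h
  split_ifs at h with hc
  · rw [Nat.cast_inj] at h
    simp only at h hc
    omega
  · exact absurd h (ENat.top_ne_natCast _)

theorem serv_le (S : SquareRun) (i : ℕ) (h1 : 1 ≤ i) (hi : i ≤ S.N) (a b : ℕ)
    (hq : ((a, b) : Replica) ∈ Repl (S.cur i)) (ha : a ≤ S.v i) (hb : b ≤ S.t i)
    (ha' : S.v i ≤ a + 5 * S.ρ i) (hb' : S.t i ≤ b + 5 * S.ρ i) : S.us i ≤ a := by
  refine S.serv_min i h1 hi _ hq ⟨?_, ?_, ?_, ?_⟩ <;> simp only <;> omega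

/-- Closest replica of an uncovered request. -/
theorem unc_closest (S : SquareRun) (i : ℕ) (h1 : 1 ≤ i) (hi : i ≤ S.N) (hu : S.uncovered i) :
    S.us i ≤ S.u' i ∧ S.t i = S.s' i + S.ρ i ∧ S.v i < S.us i + S.ρ i := by
  have h2 := S.closest i h1 hi
  have h3 := S.serv_le i h1 hi _ _ (S.closest_mem i h1 hi) h2.1 h2.2.1 (by omega) (by omega)
  have h4 := S.us_le i h1 hi
  unfold uncovered covered at hu
  omega

/-- The balls of `j` and `i` share an edge. -/
def Share (S : SquareRun) (j i : ℕ) : Prop :=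
  ¬ BallsEdgeDisjoint (S.req j) (S.ρ j) (S.req i) (S.ρ i)

theorem share_head (S : SquareRun) (j i : ℕ) (h : S.Share j i) :
    ∃ a b, a ≤ S.v i ∧ a ≤ S.v j ∧ b ≤ S.t i ∧ b ≤ S.t j ∧
      S.v i + S.t i < a + b + S.ρ i ∧ S.v j + S.t j < a + b + S.ρ j := by
  unfold Share BallsEdgeDisjoint at h
  push Not at h
  obtain ⟨⟨⟨a, b⟩, ⟨c, d⟩⟩, ⟨hg, h1, h2⟩, ⟨_, h3, h4⟩⟩ := h
  simp only [qball, req, Set.mem_ofPred_eq] at h1 h2 h3 h4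
  refine ⟨c, d, ?_⟩
  rcases hg with hg | hg
  · unfold isHoriz at hg
    simp only [Prod.mk.injEq] at hg
    omega
  · unfold isArc at hg
    simp only [Prod.mk.injEq] at hg
    omega

theorem share_lt (S : SquareRun) (j i : ℕ) (h1 : 1 ≤ j) (hj : j < i) (hi : i ≤ S.N)
    (h : S.Share j i) : S.v i < S.us j ∧ S.v j < S.v i + S.ρ j ∧ S.t i < S.t j + S.ρ i := by
  obtain ⟨a, b, ha, ha', hb, hb', h5, h6⟩ := S.share_head j i h
  have hle := S.us_le j h1 (by omega)
  have ht := S.t_mono j i hj.le hi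
  refine ⟨?_, by omega, by omega⟩
  by_contra hc
  have := S.rho_le i (by omega) hi (max (S.us j) a) (S.t j)
    (S.row_mem j i _ h1 hj hi (le_max_left _ _) (by omega)) (by omega) ht
  omega

theorem covered_disj (S : SquareRun) (j i : ℕ) (h1 : 1 ≤ j) (hj : j < i) (hi : i ≤ S.N)
    (hc : S.covered j) : BallsEdgeDisjoint (S.req j) (S.ρ j) (S.req i) (S.ρ i) := by
  by_contra h
  have h2 := S.share_lt j i h1 hj hi h
  have hle := S.us_le j h1 (by omega)
  unfold covered at hc
  omega

theorem share_four (S : SquareRun) (j i : ℕ) (h1 : 1 ≤ j) (hj : j < i) (hi : i ≤ S.N)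
    (hui : S.uncovered i) (h : S.Share j i) : 4 * S.ρ j < S.ρ i := by
  by_contra hc
  have h2 := S.share_lt j i h1 hj hi h
  have hle := S.us_le j h1 (by omega)
  have hu := S.unc_closest i (by omega) hi hui
  have hcl := S.closest i (by omega) hi
  have ht := S.t_mono j i hj.le hi
  rcases S.origin j i h1 hj.le hi _ (S.closest_mem i (by omega) hi) with h | h | ⟨m, m1, m2, m3, m4, _⟩
  · have h0 := S.zero_mem i (by omega) hi
    simp only at h
    rw [← h] at h0
    have := S.closest_late i (by omega) hi _ le_rfl h0
    omega
  · have := S.serv_le j h1 (by omega) _ _ (repl_mono (S.sol_le_cur j) h) (by omega) (by omega)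
      (by omega) (by omega)
    omega
  · have t1 := S.t_mono j m m1 (by omega)
    have t2 := S.t_mono m i m2.le hi
    have := S.closest_late i (by omega) hi _ t2 (S.row_mem m i _ (by omega) m2 hi m3 m4)
    omega

theorem old_far (S : SquareRun) (j i : ℕ) (h1 : 1 ≤ j) (hj : j < i) (hi : i ≤ S.N)
    (h : S.Share j i) (q : Replica) (hq : q ∈ Repl (S.sol (j - 1))) (hq1 : S.v i < q.1)
    (hq2 : q.1 < S.us j) : q.2 + 5 * S.ρ j < S.t j := by
  by_contra hc
  have h2 := S.share_lt j i h1 hj hi h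
  have hle := S.us_le j h1 (by omega)
  have hq' := repl_mono (S.sol_le_cur j) hq
  by_cases ht : S.t j ≤ q.2
  · have := S.serv_le j h1 (by omega) _ _ (S.persist j h1 (by omega) q hq' ht) (by omega) le_rfl
      (by omega) (by omega)
    omega
  · have := S.serv_le j h1 (by omega) q.1 q.2 hq' (by omega) (by omega)
      (by omega) (by omega)
    omega

theorem no_cross (S : SquareRun) (j m i : ℕ) (h1 : 1 ≤ j) (hj : j < m) (hm : m < i) (hi : i ≤ S.N)
    (h : S.Share j i) (ha : S.us m ≤ S.v i) (hb : S.v i < S.v m) : False := by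
  have h2 := S.share_lt j i h1 (by omega) hi h
  have t1 := S.t_mono j m hj.le (by omega)
  have t2 := S.t_mono m i hm.le hi
  have := S.rho_le i (by omega) hi _ _ (S.row_mem m i (S.v i) (by omega) hm hi ha hb.le) le_rfl t2
  omega

theorem siblings (S : SquareRun) (j k i : ℕ) (h1 : 1 ≤ j) (hj : j < k) (hk : k < i) (hi : i ≤ S.N)
    (huk : S.uncovered k) (hji : S.Share j i) (hki : S.Share k i)
    (hd : BallsEdgeDisjoint (S.req j) (S.ρ j) (S.req k) (S.ρ k)) :
    S.t j + 4 * S.ρ j ≤ S.t k := by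
  by_contra hc
  have hJ := S.share_lt j i h1 (by omega) hi hji
  have hK := S.share_lt k i (by omega) hk hi hki
  have leJ := S.us_le j h1 (by omega)
  have leK := S.us_le k (by omega) (by omega)
  have tjk := S.t_mono j k hj.le (by omega)
  by_cases hv : S.us j ≤ S.v k
  · have := S.rho_le k (by omega) (by omega) _ _
      (S.col_mem j k (S.t k) h1 hj (by omega) tjk (by omega)) hv le_rfl
    omega
  -- the first request after j with serving column in the window
  have hex : ∃ l, j < l ∧ l ≤ k ∧ S.v i < S.us l ∧ S.us l ≤ S.v k :=
    ⟨k, hj, le_rfl, hK.1, leK.1⟩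
  classical
  obtain ⟨l, ⟨l1, l2, l3, l4⟩, hmin⟩ : ∃ l, (j < l ∧ l ≤ k ∧ S.v i < S.us l ∧ S.us l ≤ S.v k) ∧
      ∀ m, m < l → ¬ (j < m ∧ m ≤ k ∧ S.v i < S.us m ∧ S.us m ≤ S.v k) :=
    ⟨Nat.find hex, Nat.find_spec hex, fun m hm => Nat.find_min hex hm⟩
  have key : ∀ q ∈ Repl (S.cur l), S.v i < q.1 → q.1 ≤ S.v k → q.2 + 5 * S.ρ j < S.t j := by
    intro q hq hq1 hq2
    rcases S.origin j l h1 l1.le (by omega) q hq with h | h | ⟨m, m1, m2, m3, m4, _⟩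
    · omega
    · exact S.old_far j i h1 (by omega) hi hji q h hq1 (by omega)
    · exfalso
      have hmj : m ≠ j := by rintro rfl; omega
      by_cases hm : S.us m ≤ S.v i
      · exact S.no_cross j m i h1 (by omega) (by omega) hi hji hm (by omega)
      · exact hmin m m2 ⟨by omega, by omega, by omega, by omega⟩
  rcases Nat.lt_or_ge l k with hlk | hlk
  · have h3 := key _ (S.serv_mem l (by omega) (by omega)).1 l3 l4
    simp only at h3
    have leL := S.us_le l (by omega) (by omega)
    have tjl := S.t_mono j l l1.le (by omega)
    have tlk := S.t_mono l k hlk.le (by omega)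
    have := S.rho_le k (by omega) (by omega) _ _
      (S.col_mem l k (S.t k) (by omega) hlk (by omega) tlk (by omega)) l4 le_rfl
    omega
  · have hlk' : l = k := by omega
    subst hlk'
    have hu := S.unc_closest l (by omega) (by omega) huk
    have hcl := S.closest l (by omega) (by omega)
    have h3 := key _ (S.closest_mem l (by omega) (by omega)) (by simp only; omega) hcl.1
    simp only at h3
    apply hd ((S.v l, S.t j - 1), (S.v l, S.t j))
    have hg : isGridEdge ((S.v l, S.t j - 1), (S.v l, S.t j)) := by
      right
      unfold isArc
      simp only [Prod.mk.injEq, true_and]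
      omega
    refine ⟨⟨hg, ?_, ?_⟩, ⟨hg, ?_, ?_⟩⟩ <;> simp only [qball, req, Set.mem_ofPred_eq] <;> omega

theorem ball_card (S : SquareRun) (F : Finset GEdge) (hF : S.Feasible F) (i : ℕ) (h1 : 1 ≤ i)
    (hi : i ≤ S.N) :
    ∃ A : Finset GEdge, A ⊆ F ∧ (∀ e ∈ A, ballEdge (S.req i) (S.ρ i) e) ∧ A.card = S.ρ i := by
  obtain ⟨hg, hp, _⟩ := hF
  obtain ⟨L, f, f0, fL, hf⟩ := hp i h1 hi
  have hstep : ∀ k < L, (f (k+1)).1 + (f (k+1)).2 = (f k).1 + (f k).2 + 1 ∧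
      (f k).1 ≤ (f (k+1)).1 ∧ (f k).2 ≤ (f (k+1)).2 := by
    intro k hk
    rcases hg _ (hf k hk) with h | h
    · unfold isHoriz at h
      simp only at h
      rw [h]; simp only; omega
    · unfold isArc at h
      simp only at h
      rw [h]; simp only; omega
  have hsum : ∀ k ≤ L, (f k).1 + (f k).2 = k := by
    intro k
    induction k with
    | zero => intro _; simp [f0]
    | succ n ih => intro hn; have := ih (by omega); have := hstep n (by omega); omega
  have hmono : ∀ d k, k + d = L → (f k).1 ≤ S.v i ∧ (f k).2 ≤ S.t i := by
    intro d
    induction d with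
    | zero => intro k hk; have : k = L := by omega
              subst this; rw [fL]; exact ⟨le_rfl, le_rfl⟩
    | succ n ih => intro k hk; have := ih (k+1) (by omega); have := hstep k (by omega); omega
  have hL : S.v i + S.t i = L := by
    have := hsum L le_rfl
    rw [fL] at this
    exact this
  have hr := S.rho_le i h1 hi 0 0 (Or.inl rfl) (by omega) (by omega)
  have hball : ∀ k, L - S.ρ i ≤ k → k ≤ L → f k ∈ qball (S.req i) (S.ρ i) := by
    intro k hk hk'
    have a := hmono (L - k) k (by omega)
    have b := hsum k hk'
    simp only [qball, req, Set.mem_ofPred_eq]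
    omega
  refine ⟨(Finset.Ico (L - S.ρ i) L).image (fun k => (f k, f (k+1))), ?_, ?_, ?_⟩
  · intro e he
    rw [Finset.mem_image] at he
    obtain ⟨k, hk, rfl⟩ := he
    exact hf k (Finset.mem_Ico.1 hk).2
  · intro e he
    rw [Finset.mem_image] at he
    obtain ⟨k, hk, rfl⟩ := he
    rw [Finset.mem_Ico] at hk
    exact ⟨hg _ (hf k hk.2), hball k hk.1 hk.2.le, hball (k+1) (by omega) (by omega)⟩
  · rw [Finset.card_image_of_injOn, Nat.card_Ico]
    · omega
    · intro a ha b hb hab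
      simp only [Finset.coe_Ico, Set.mem_Ico] at ha hb
      simp only [Prod.mk.injEq] at hab
      have h3 := hsum a ha.2.le
      have h4 := hsum b hb.2.le
      rw [hab.1] at h3
      omega

theorem disj_sum (S : SquareRun) (F : Finset GEdge) (hF : S.Feasible F) (I : Finset ℕ)
    (hI : ∀ i ∈ I, 1 ≤ i ∧ i ≤ S.N)
    (hd : ∀ i ∈ I, ∀ j ∈ I, i < j → BallsEdgeDisjoint (S.req i) (S.ρ i) (S.req j) (S.ρ j)) :
    ∑ i ∈ I, S.ρ i ≤ F.card := by
  classical
  have h : ∀ i, ∃ A : Finset GEdge, i ∈ I →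
      A ⊆ F ∧ (∀ e ∈ A, ballEdge (S.req i) (S.ρ i) e) ∧ A.card = S.ρ i := by
    intro i
    by_cases hi : i ∈ I
    · obtain ⟨A, hA⟩ := S.ball_card F hF i (hI i hi).1 (hI i hi).2
      exact ⟨A, fun _ => hA⟩
    · exact ⟨∅, fun h => absurd h hi⟩
  choose A hA using h
  have h1 : ∑ i ∈ I, S.ρ i = (I.biUnion A).card := by
    rw [Finset.card_biUnion]
    · exact Finset.sum_congr rfl fun i hi => (hA i hi).2.2.symm
    · intro i hi j hj hij
      rw [Function.onFun, Finset.disjoint_left]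
      intro e he he'
      have a := (hA i hi).2.1 e he
      have b := (hA j hj).2.1 e he'
      rcases Nat.lt_or_gt_of_ne hij with h | h
      · exact hd i hi j hj h e ⟨a, b⟩
      · exact hd j hj i hi h e ⟨b, a⟩
  rw [h1]
  exact Finset.card_le_card (Finset.biUnion_subset.2 fun i hi => (hA i hi).1)

theorem children_sum (S : SquareRun) (i : ℕ) (C : Finset ℕ) (hC : ∀ j ∈ C, S.IsParent i j) :
    2 * ∑ j ∈ C, S.ρ j ≤ S.ρ i := by
  classical
  have h1 : ∑ j ∈ C, 4 * S.ρ j =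
      (C.biUnion fun j => Finset.Ico (S.t j) (S.t j + 4 * S.ρ j)).card := by
    rw [Finset.card_biUnion]
    · refine Finset.sum_congr rfl fun j _ => ?_
      rw [Nat.card_Ico]; omega
    · have key : ∀ a ∈ C, ∀ b ∈ C, a < b → S.t a + 4 * S.ρ a ≤ S.t b := by
        intro a ha b hb hab
        obtain ⟨a1, a2, a3, a4, a5, a6, a7⟩ := hC a ha
        obtain ⟨b1, b2, b3, b4, b5, b6, b7⟩ := hC b hb
        exact S.siblings a b i a1 hab b2 a3 b4 a6 b6 (a7 b hab b2 b4)
      intro a ha b hb hab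
      rw [Function.onFun, Finset.disjoint_left]
      intro x hx hx'
      rw [Finset.mem_Ico] at hx hx'
      rcases Nat.lt_or_gt_of_ne hab with h | h
      · have := key a ha b hb h
        omega
      · have := key b hb a ha h
        omega
  have h2 : (C.biUnion fun j => Finset.Ico (S.t j) (S.t j + 4 * S.ρ j)) ⊆
      Finset.Ico (S.t i - S.ρ i) (S.t i + S.ρ i) := by
    refine Finset.biUnion_subset.2 fun j hj => ?_
    obtain ⟨a1, a2, a3, a4, a5, a6, a7⟩ := hC j hj
    have h3 := S.share_lt j i a1 a2 a3 a6
    have h4 := S.share_four j i a1 a2 a3 a5 a6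
    have h5 := S.t_mono j i a2.le a3
    intro x hx
    rw [Finset.mem_Ico] at hx ⊢
    omega
  have h3 := Finset.card_le_card h2
  rw [← h1, ← Finset.mul_sum, Nat.card_Ico] at h3
  omega

theorem exists_parent (S : SquareRun) (j : ℕ) (h1 : 1 ≤ j) (hj : j ≤ S.N) (hu : S.uncovered j)
    (hr : ¬ S.IsRoot j) : ∃ i, S.IsParent i j := by
  classical
  have hex : ∃ i, j < i ∧ i ≤ S.N ∧ S.uncovered i ∧ S.Share j i := by
    by_contra hc
    push Not at hc
    exact hr ⟨h1, hj, hu, fun i a b c => by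
      by_contra hh
      exact hc i a b c hh⟩
  obtain ⟨a, b, c, d⟩ := Nat.find_spec hex
  refine ⟨Nat.find hex, h1, a, b, hu, c, d, fun k k1 k2 k3 => ?_⟩
  by_contra hh
  exact Nat.find_min hex k2 ⟨k1, by omega, k3, hh⟩

end SquareRun

/-- The sum of all radii computed by Square is at most three times the optimum:
`Σ_{i=1}^{N} ρ(i) ≤ 3·|opt|`. -/
theorem sum_radii_le_three_opt (S : SquareRun) :
    ∀ F : Finset GEdge, S.Feasible F →
      ∑ i ∈ Finset.Icc 1 S.N, S.ρ i ≤ 3 * F.card := by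
  intro F hF
  classical
  have hcov : ∑ i ∈ (Finset.Icc 1 S.N).filter (fun i => S.covered i), S.ρ i ≤ F.card := by
    refine S.disj_sum F hF _ (fun i hi => Finset.mem_Icc.1 (Finset.mem_filter.1 hi).1) ?_
    intro i hi j hj hij
    rw [Finset.mem_filter, Finset.mem_Icc] at hi hj
    exact S.covered_disj i j hi.1.1 hij hj.1.2 hi.2
  have hroot : ∑ i ∈ (Finset.Icc 1 S.N).filter (fun i => S.IsRoot i), S.ρ i ≤ F.card := by
    refine S.disj_sum F hF _ (fun i hi => Finset.mem_Icc.1 (Finset.mem_filter.1 hi).1) ?_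
    intro i hi j hj hij
    rw [Finset.mem_filter, Finset.mem_Icc] at hi hj
    exact hi.2.2.2.2 j hij hj.1.2 hj.2.2.2.1
  set U := (Finset.Icc 1 S.N).filter (fun i => ¬ S.covered i) with hU
  have hsplit : ∑ i ∈ (Finset.Icc 1 S.N).filter (fun i => S.covered i), S.ρ i + ∑ i ∈ U, S.ρ i
      = ∑ i ∈ Finset.Icc 1 S.N, S.ρ i := Finset.sum_filter_add_sum_filter_not _ _ _
  have hsplit2 : ∑ i ∈ U.filter (fun i => S.IsRoot i), S.ρ i
      + ∑ i ∈ U.filter (fun i => ¬ S.IsRoot i), S.ρ i = ∑ i ∈ U, S.ρ i :=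
    Finset.sum_filter_add_sum_filter_not _ _ _
  have hroot2 : ∑ i ∈ U.filter (fun i => S.IsRoot i), S.ρ i ≤ F.card := by
    refine le_trans (Finset.sum_le_sum_of_subset ?_) hroot
    intro i hi
    rw [Finset.mem_filter] at hi ⊢
    exact ⟨(Finset.mem_filter.1 hi.1).1, hi.2⟩
  have hpar : ∀ j, ∃ i, j ∈ U.filter (fun i => ¬ S.IsRoot i) → S.IsParent i j := by
    intro j
    by_cases hj : j ∈ U.filter (fun i => ¬ S.IsRoot i)
    · have hj' := hj
      rw [Finset.mem_filter, hU, Finset.mem_filter, Finset.mem_Icc] at hj'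
      obtain ⟨i, hi⟩ := S.exists_parent j hj'.1.1.1 hj'.1.1.2 hj'.1.2 hj'.2
      exact ⟨i, fun _ => hi⟩
    · exact ⟨0, fun h => absurd h hj⟩
  choose par hpar using hpar
  have hmaps : ∀ j ∈ U.filter (fun i => ¬ S.IsRoot i), par j ∈ U := by
    intro j hj
    obtain ⟨a1, a2, a3, a4, a5, _⟩ := hpar j hj
    rw [hU, Finset.mem_filter, Finset.mem_Icc]
    exact ⟨⟨by omega, a3⟩, a5⟩
  have hfib := Finset.sum_fiberwise_of_maps_to hmaps (fun j => S.ρ j)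
  have hle : 2 * ∑ i ∈ U.filter (fun i => ¬ S.IsRoot i), S.ρ i ≤ ∑ i ∈ U, S.ρ i := by
    rw [← hfib, Finset.mul_sum]
    refine Finset.sum_le_sum fun i _ => ?_
    refine S.children_sum i _ fun j hj => ?_
    obtain ⟨h1, h2⟩ := Finset.mem_filter.1 hj
    rw [← h2]
    exact hpar j h1
  omega
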